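/- Let A ∈ ℝ^{n×n} be symmetric and let s ∈ ℝⁿ be such that s and A s are linearly independent. Then there exists an n×n real orthogonal matrix U that is the product of two Householder matrices such that the best Frobenius-norm approximation L_A of A in the algebra L = sd U satisfies L_A s = A s. Moreover, two of the columns of U can be taken to be suitable linear combinations of s and A s. -/

import Mathlib

/-!
The compression of the symmetric matrix `A` to the plane `V` spanned by `s` and `A s` is a symmetric
`2 × 2` form, so `V` has an orthonormal basis `w₁, w₂` with `w₁ᵀ A w₂ = 0`
(`exists_orthonormal_diagonalizing`). Writing `s = α₁ w₁ + α₂ w₂` and using `A s ∈ V`, one gets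
`A s = α₁ (w₁ᵀ A w₁) w₁ + α₂ (w₂ᵀ A w₂) w₂`, which is exactly `L_A s` for every orthogonal `U` having
`w₁` and `w₂` among its columns.

Such a `U` is a product of two reflections: `H(e₁ - w₁)` swaps `e₁` and `w₁`, and then
`H(e₂ - H(e₁ - w₁) w₂)` fixes `e₁` and moves `e₂` to `H(e₁ - w₁) w₂`. The two reflection vectors are
nonzero after possibly changing the signs of `w₁` and `w₂`, which is harmless.
-/

open Matrix

/-- The best Frobenius-norm approximation of `A` in `sd U`:
`U d(z_A) Uᵀ` with `(z_A)_i = (Uᵀ A U)_{ii}`. -/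
noncomputable def sdProjR {n : ℕ} (U A : Matrix (Fin n) (Fin n) ℝ) :
    Matrix (Fin n) (Fin n) ℝ :=
  U * Matrix.diagonal (fun i => (Uᵀ * A * U) i i) * Uᵀ

/-- The Householder matrix `H(p) = I − (2/‖p‖²) p pᵀ`. -/
noncomputable def householder {n : ℕ} (p : Fin n → ℝ) : Matrix (Fin n) (Fin n) ℝ :=
  1 - (2 / (p ⬝ᵥ p)) • Matrix.vecMulVec p p

lemma householder_mulVec {n : ℕ} (p x : Fin n → ℝ) :
    householder p *ᵥ x = x - (2 / (p ⬝ᵥ p) * (p ⬝ᵥ x)) • p := by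
  ext i
  simp [householder, Matrix.sub_mulVec, Matrix.smul_mulVec, Matrix.vecMulVec_mulVec]
  ring

lemma householder_transpose {n : ℕ} (p : Fin n → ℝ) : (householder p)ᵀ = householder p := by
  simp [householder, Matrix.transpose_vecMulVec]

lemma dotProduct_self_ne_zero {n : ℕ} {p : Fin n → ℝ} (hp : p ≠ 0) : p ⬝ᵥ p ≠ 0 := by
  simpa using hp

lemma householder_mulVec_mulVec {n : ℕ} {p : Fin n → ℝ} (hp : p ≠ 0) (x : Fin n → ℝ) :
    householder p *ᵥ (householder p *ᵥ x) = x := by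
  have h := dotProduct_self_ne_zero hp
  rw [householder_mulVec, householder_mulVec]
  ext i
  simp only [dotProduct_sub, dotProduct_smul, Pi.sub_apply, Pi.smul_apply, smul_eq_mul]
  field_simp
  ring

lemma householder_mul_self {n : ℕ} {p : Fin n → ℝ} (hp : p ≠ 0) :
    householder p * householder p = 1 := by
  apply Matrix.ext_of_mulVec_single
  intro i
  rw [← Matrix.mulVec_mulVec, householder_mulVec_mulVec hp, Matrix.one_mulVec]

lemma householder_mem {n : ℕ} {p : Fin n → ℝ} (hp : p ≠ 0) :
    householder p ∈ Matrix.orthogonalGroup (Fin n) ℝ := by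
  rw [Matrix.mem_orthogonalGroup_iff, householder_transpose, householder_mul_self hp]

lemma householder_dotProduct {n : ℕ} {p : Fin n → ℝ} (hp : p ≠ 0) (x y : Fin n → ℝ) :
    (householder p *ᵥ x) ⬝ᵥ (householder p *ᵥ y) = x ⬝ᵥ y := by
  rw [Matrix.dotProduct_mulVec, ← Matrix.mulVec_transpose, householder_transpose,
    householder_mulVec_mulVec hp]

/-- The reflection along `x - y` exchanges two vectors `x ≠ y` of equal length. -/
lemma householder_sub_mulVec {n : ℕ} {x y : Fin n → ℝ} (hxy : x ⬝ᵥ x = y ⬝ᵥ y) (h : x - y ≠ 0) :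
    householder (x - y) *ᵥ x = y := by
  have h' := dotProduct_self_ne_zero h
  rw [householder_mulVec]
  have : 2 / ((x - y) ⬝ᵥ (x - y)) * ((x - y) ⬝ᵥ x) = 1 := by
    rw [div_mul_eq_mul_div, div_eq_one_iff_eq h']
    simp only [sub_dotProduct, dotProduct_sub, dotProduct_comm y x, ← hxy]
    ring
  rw [this, one_smul, sub_sub_cancel]

lemma householder_mulVec_of_orthogonal {n : ℕ} {p x : Fin n → ℝ} (h : p ⬝ᵥ x = 0) :
    householder p *ᵥ x = x := by
  simp [householder_mulVec, h]

lemma exists_sign_sub_ne_zero {n : ℕ} {x : Fin n → ℝ} (hx : x ≠ 0) (y : Fin n → ℝ) :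
    ∃ ε : ℝ, ε * ε = 1 ∧ x - ε • y ≠ 0 := by
  by_cases h : x - y = 0
  · refine ⟨-1, by norm_num, fun h2 => hx ?_⟩
    have e : x = y := sub_eq_zero.mp h
    subst e
    ext i
    have := congrFun h2 i
    simp at this ⊢
    linarith
  · exact ⟨1, by norm_num, by simpa using h⟩

/-- Up to signs, an orthonormal pair occurs as two prescribed columns of a product of two
Householder matrices. -/
lemma exists_householder_columns {n : ℕ} {j₁ j₂ : Fin n} (hj : j₁ ≠ j₂) {u v : Fin n → ℝ}
    (hu : u ⬝ᵥ u = 1) (hv : v ⬝ᵥ v = 1) (huv : u ⬝ᵥ v = 0) :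
    ∃ p q : Fin n → ℝ, p ≠ 0 ∧ q ≠ 0 ∧ ∃ ε δ : ℝ, ε * ε = 1 ∧ δ * δ = 1 ∧
      (householder p * householder q) *ᵥ Pi.single j₁ 1 = ε • u ∧
      (householder p * householder q) *ᵥ Pi.single j₂ 1 = δ • v := by
  have e1 : (Pi.single j₁ 1 : Fin n → ℝ) ≠ 0 := by simp
  have e2 : (Pi.single j₂ 1 : Fin n → ℝ) ≠ 0 := by simp
  obtain ⟨ε, hε, hp⟩ := exists_sign_sub_ne_zero e1 u
  set p := (Pi.single j₁ 1 : Fin n → ℝ) - ε • u with hpdef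
  have hp1 : householder p *ᵥ Pi.single j₁ 1 = ε • u :=
    householder_sub_mulVec (by simp [hu, hε]) hp
  have hp2 : householder p *ᵥ (ε • u) = Pi.single j₁ 1 := by
    rw [← hp1, householder_mulVec_mulVec hp]
  obtain ⟨δ, hδ, hq⟩ := exists_sign_sub_ne_zero e2 (householder p *ᵥ v)
  set q := (Pi.single j₂ 1 : Fin n → ℝ) - δ • (householder p *ᵥ v) with hqdef
  have hq2 : householder q *ᵥ Pi.single j₂ 1 = δ • (householder p *ᵥ v) :=
    householder_sub_mulVec (by
      simp only [smul_dotProduct, dotProduct_smul, householder_dotProduct hp, hv]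
      simp [hδ]) hq
  have hq1 : householder q *ᵥ Pi.single j₁ 1 = Pi.single j₁ 1 := by
    apply householder_mulVec_of_orthogonal
    have : (householder p *ᵥ v) ⬝ᵥ Pi.single j₁ 1 = 0 := by
      rw [← hp2, householder_dotProduct hp, dotProduct_smul, dotProduct_comm, huv, smul_zero]
    rw [hqdef, sub_dotProduct, smul_dotProduct, this]
    simp [hj]
  refine ⟨p, q, hp, hq, ε, δ, hε, hδ, ?_, ?_⟩
  · rw [← Matrix.mulVec_mulVec, hq1, hp1]
  · rw [← Matrix.mulVec_mulVec, hq2, Matrix.mulVec_smul, householder_mulVec_mulVec hp]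

lemma exists_normalize {n : ℕ} {x : Fin n → ℝ} (hx : x ≠ 0) :
    ∃ r : ℝ, r ≠ 0 ∧ (r • x) ⬝ᵥ (r • x) = 1 := by
  have h : 0 < x ⬝ᵥ x := lt_of_le_of_ne
    (Finset.sum_nonneg fun i _ => mul_self_nonneg (x i)) (dotProduct_self_ne_zero hx).symm
  refine ⟨(√(x ⬝ᵥ x))⁻¹, by positivity, ?_⟩
  simp only [smul_dotProduct, dotProduct_smul, smul_eq_mul]
  rw [← mul_assoc, ← mul_inv, Real.mul_self_sqrt h.le, inv_mul_cancel₀ (ne_of_gt h)]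

/-- Gram–Schmidt for two vectors. -/
lemma exists_orthonormal {n : ℕ} {s t : Fin n → ℝ} (hli : LinearIndependent ℝ ![s, t]) :
    ∃ u v : Fin n → ℝ, u ⬝ᵥ u = 1 ∧ v ⬝ᵥ v = 1 ∧ u ⬝ᵥ v = 0 ∧
      (∃ a b : ℝ, u = a • s + b • t) ∧ (∃ a b : ℝ, v = a • s + b • t) ∧
      (∃ a b : ℝ, s = a • u + b • v) ∧ (∃ a b : ℝ, t = a • u + b • v) := by
  rw [LinearIndependent.pair_iff] at hli
  have hs : s ≠ 0 := by
    rintro rfl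
    simpa using (hli 1 0 (by simp)).1
  obtain ⟨r, hr, hu⟩ := exists_normalize hs
  set k := (r • s) ⬝ᵥ t with hk
  have hx : t - k • (r • s) ≠ 0 := by
    intro h
    have := (hli (-(k * r)) 1 (by rw [← h]; module)).2
    exact one_ne_zero this
  obtain ⟨m, hm, hv⟩ := exists_normalize hx
  refine ⟨r • s, m • (t - k • (r • s)), hu, hv, ?_, ⟨r, 0, by module⟩,
    ⟨-(m * k * r), m, by module⟩, ⟨r⁻¹, 0, ?_⟩, ⟨k, m⁻¹, ?_⟩⟩
  · rw [dotProduct_smul, dotProduct_sub, dotProduct_smul, hu, ← hk]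
    simp
  · rw [inv_smul_smul₀ hr, zero_smul, add_zero]
  · rw [inv_smul_smul₀ hm]
    module

/-- A rotation angle diagonalizing the symmetric form with matrix `!![a, b; b, c]`: the off-diagonal
entry after rotation by `θ` changes from `b` to `-b` between `θ = 0` and `θ = π / 2`. -/
lemma exists_rotation (a b c : ℝ) :
    ∃ x y : ℝ, x * x + y * y = 1 ∧ x * y * (c - a) + (x * x - y * y) * b = 0 := by
  let f : ℝ → ℝ := fun θ => Real.cos θ * Real.sin θ * (c - a) +
    (Real.cos θ * Real.cos θ - Real.sin θ * Real.sin θ) * b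
  have hf : Continuous f := by fun_prop
  have h0 : f 0 = b := by simp [f]
  have h1 : f (Real.pi / 2) = -b := by simp [f]
  have hmem : (0 : ℝ) ∈ Set.uIcc (f 0) (f (Real.pi / 2)) := by
    rw [h0, h1, Set.mem_uIcc]
    rcases le_total 0 b with h | h
    · right; constructor <;> linarith
    · left; constructor <;> linarith
  obtain ⟨θ, -, hθ⟩ := intermediate_value_uIcc hf.continuousOn hmem
  exact ⟨Real.cos θ, Real.sin θ, by nlinarith [Real.sin_sq_add_cos_sq θ], hθ⟩

lemma dotProduct_mulVec_symm {n : ℕ} {A : Matrix (Fin n) (Fin n) ℝ} (hA : A.IsSymm)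
    (x y : Fin n → ℝ) : x ⬝ᵥ A *ᵥ y = y ⬝ᵥ A *ᵥ x := by
  rw [Matrix.dotProduct_mulVec, ← Matrix.mulVec_transpose, hA.eq, dotProduct_comm]

/-- The plane spanned by `s` and `t` has an orthonormal basis that is orthogonal for the quadratic
form of `A`. -/
lemma exists_orthonormal_diagonalizing {n : ℕ} {A : Matrix (Fin n) (Fin n) ℝ} (hA : A.IsSymm)
    {s t : Fin n → ℝ} (hli : LinearIndependent ℝ ![s, t]) :
    ∃ u v : Fin n → ℝ, u ⬝ᵥ u = 1 ∧ v ⬝ᵥ v = 1 ∧ u ⬝ᵥ v = 0 ∧ u ⬝ᵥ A *ᵥ v = 0 ∧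
      (∃ a b : ℝ, u = a • s + b • t) ∧ (∃ a b : ℝ, v = a • s + b • t) ∧
      (∃ a b : ℝ, s = a • u + b • v) ∧ (∃ a b : ℝ, t = a • u + b • v) := by
  obtain ⟨u, v, hu, hv, huv, ⟨a₁, b₁, h₁⟩, ⟨a₂, b₂, h₂⟩, ⟨a₃, b₃, h₃⟩, ⟨a₄, b₄, h₄⟩⟩ :=
    exists_orthonormal hli
  obtain ⟨x, y, hxy, hd⟩ := exists_rotation (u ⬝ᵥ A *ᵥ u) (u ⬝ᵥ A *ᵥ v) (v ⬝ᵥ A *ᵥ v)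
  have hvu : v ⬝ᵥ u = 0 := by rw [dotProduct_comm, huv]
  have hu' : u = x • (x • u + y • v) + (-y) • (-y • u + x • v) := by
    calc u = (x * x + y * y) • u := by rw [hxy, one_smul]
      _ = _ := by module
  have hv' : v = y • (x • u + y • v) + x • (-y • u + x • v) := by
    calc v = (x * x + y * y) • v := by rw [hxy, one_smul]
      _ = _ := by module
  refine ⟨x • u + y • v, -y • u + x • v, ?_, ?_, ?_, ?_,
    ⟨x * a₁ + y * a₂, x * b₁ + y * b₂, ?_⟩, ⟨-y * a₁ + x * a₂, -y * b₁ + x * b₂, ?_⟩,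
    ⟨a₃ * x + b₃ * y, a₃ * -y + b₃ * x, ?_⟩, ⟨a₄ * x + b₄ * y, a₄ * -y + b₄ * x, ?_⟩⟩
  · simp only [add_dotProduct, dotProduct_add, smul_dotProduct, dotProduct_smul, smul_eq_mul,
      hu, hv, huv, hvu]
    linarith
  · simp only [add_dotProduct, dotProduct_add, smul_dotProduct, dotProduct_smul, smul_eq_mul,
      hu, hv, huv, hvu]
    linarith
  · simp only [add_dotProduct, dotProduct_add, smul_dotProduct, dotProduct_smul, smul_eq_mul,
      hu, hv, huv, hvu]
    ring
  · simp only [Matrix.mulVec_add, Matrix.mulVec_smul, add_dotProduct, dotProduct_add,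
      smul_dotProduct, dotProduct_smul, smul_eq_mul, dotProduct_mulVec_symm hA v u]
    linarith
  · rw [h₁, h₂]; module
  · rw [h₁, h₂]; module
  · calc s = a₃ • u + b₃ • v := h₃
      _ = a₃ • (x • (x • u + y • v) + (-y) • (-y • u + x • v)) +
          b₃ • (y • (x • u + y • v) + x • (-y • u + x • v)) := by rw [← hu', ← hv']
      _ = _ := by module
  · calc t = a₄ • u + b₄ • v := h₄
      _ = a₄ • (x • (x • u + y • v) + (-y) • (-y • u + x • v)) +
          b₄ • (y • (x • u + y • v) + x • (-y • u + x • v)) := by rw [← hu', ← hv']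
      _ = _ := by module

/-- A column `U e_j` of an orthogonal `U` is an eigenvector of every element of `sd U`; for the
projection of `A` the eigenvalue is the Rayleigh quotient of `A`. -/
lemma sdProjR_mulVec_column {n : ℕ} {U A : Matrix (Fin n) (Fin n) ℝ}
    (hU : U ∈ Matrix.orthogonalGroup (Fin n) ℝ) {j : Fin n} {w : Fin n → ℝ}
    (hw : U *ᵥ Pi.single j 1 = w) :
    sdProjR U A *ᵥ w = (w ⬝ᵥ A *ᵥ w) • w := by
  have hUU : Uᵀ * U = 1 := (Matrix.mem_orthogonalGroup_iff' _ _).mp hU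
  have hback : Uᵀ *ᵥ w = Pi.single j 1 := by
    rw [← hw, Matrix.mulVec_mulVec, hUU, Matrix.one_mulVec]
  have hz : (Uᵀ * A * U) j j = w ⬝ᵥ A *ᵥ w := by
    have : (Uᵀ * A * U) j j = Pi.single j 1 ⬝ᵥ ((Uᵀ * A * U) *ᵥ Pi.single j 1) := by simp
    rw [this, ← Matrix.mulVec_mulVec, hw, ← Matrix.mulVec_mulVec, Matrix.dotProduct_mulVec,
      Matrix.vecMul_transpose, hw]
  rw [sdProjR, ← Matrix.mulVec_mulVec, hback, ← Matrix.mulVec_mulVec,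
    Matrix.diagonal_mulVec_single, hz, mul_one, ← hw, ← Matrix.mulVec_smul]
  congr 1
  ext i
  simp [Pi.single_apply]

/-- if `A` is symmetric and `s`, `A s` are linearly independent, there
is an orthogonal matrix `U`, a product of two Householder matrices, such that the
best Frobenius-norm approximation `L_A` of `A` in `sd U` satisfies `L_A s = A s`;
moreover two of the columns of `U` can be taken to be linear combinations of
`s` and `A s`. -/
theorem sd_proj_direction_preserving {n : ℕ} (A : Matrix (Fin n) (Fin n) ℝ)
    (hA : A.IsSymm) (s : Fin n → ℝ) (hli : LinearIndependent ℝ ![s, A *ᵥ s]) :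
    ∃ U : Matrix (Fin n) (Fin n) ℝ,
      U ∈ Matrix.orthogonalGroup (Fin n) ℝ ∧
      (∃ p q : Fin n → ℝ, p ≠ 0 ∧ q ≠ 0 ∧ U = householder p * householder q) ∧
      sdProjR U A *ᵥ s = A *ᵥ s ∧
      (∃ j₁ j₂ : Fin n, j₁ ≠ j₂ ∧
        (∃ a b : ℝ, (fun i => U i j₁) = a • s + b • (A *ᵥ s)) ∧
        (∃ c e : ℝ, (fun i => U i j₂) = c • s + e • (A *ᵥ s))) := by
  have hn : 2 ≤ n := by
    simpa using hli.fintype_card_le_finrank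
  obtain ⟨u, v, hu, hv, huv, huAv, ⟨a₁, b₁, h₁⟩, ⟨a₂, b₂, h₂⟩, ⟨a₃, b₃, h₃⟩, ⟨a₄, b₄, h₄⟩⟩ :=
    exists_orthonormal_diagonalizing hA hli
  have hj : (⟨0, by omega⟩ : Fin n) ≠ ⟨1, by omega⟩ := by simp
  obtain ⟨p, q, hp, hq, ε, δ, hε, hδ, hc₁, hc₂⟩ := exists_householder_columns hj hu hv huv
  have hU := mul_mem (householder_mem hp) (householder_mem hq)
  refine ⟨householder p * householder q, hU, ⟨p, q, hp, hq, rfl⟩, ?_, _, _, hj,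
    ⟨ε * a₁, ε * b₁, ?_⟩, ⟨δ * a₂, δ * b₂, ?_⟩⟩
  -- The eigenvector relations do not see the signs `ε`, `δ`.
  · have hLu : sdProjR (householder p * householder q) A *ᵥ u = (u ⬝ᵥ A *ᵥ u) • u := by
      have h := congrArg (ε • ·) (sdProjR_mulVec_column (A := A) hU hc₁)
      simp only [Matrix.mulVec_smul, smul_dotProduct, dotProduct_smul, smul_smul, hε, one_smul,
        smul_eq_mul] at h
      rw [h]
      congr 1
      linear_combination (ε * ε + 1) * (u ⬝ᵥ A *ᵥ u) * hε
    have hLv : sdProjR (householder p * householder q) A *ᵥ v = (v ⬝ᵥ A *ᵥ v) • v := by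
      have h := congrArg (δ • ·) (sdProjR_mulVec_column (A := A) hU hc₂)
      simp only [Matrix.mulVec_smul, smul_dotProduct, dotProduct_smul, smul_smul, hδ, one_smul,
        smul_eq_mul] at h
      rw [h]
      congr 1
      linear_combination (δ * δ + 1) * (v ⬝ᵥ A *ᵥ v) * hδ
    have hvu : v ⬝ᵥ u = 0 := by rw [dotProduct_comm, huv]
    have hvAu : v ⬝ᵥ A *ᵥ u = 0 := by rw [dotProduct_mulVec_symm hA, huAv]
    have hAs : A *ᵥ s = a₃ • A *ᵥ u + b₃ • A *ᵥ v := by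
      conv_lhs => rw [h₃]
      rw [Matrix.mulVec_add, Matrix.mulVec_smul, Matrix.mulVec_smul]
    have hcu : a₄ = a₃ * (u ⬝ᵥ A *ᵥ u) := by
      have := congrArg (u ⬝ᵥ ·) (h₄.symm.trans hAs)
      simpa [dotProduct_add, dotProduct_smul, hu, huv, huAv] using this
    have hcv : b₄ = b₃ * (v ⬝ᵥ A *ᵥ v) := by
      have := congrArg (v ⬝ᵥ ·) (h₄.symm.trans hAs)
      simpa [dotProduct_add, dotProduct_smul, hv, hvu, hvAu] using this
    rw [h₄, hcu, hcv]
    conv_lhs => rw [h₃]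
    rw [Matrix.mulVec_add, Matrix.mulVec_smul, Matrix.mulVec_smul, hLu, hLv, smul_smul, smul_smul]
  · calc _ = ε • u := by rw [← hc₁, Matrix.mulVec_single_one]; rfl
      _ = ε • (a₁ • s + b₁ • A *ᵥ s) := by rw [← h₁]
      _ = _ := by module
  · calc _ = δ • v := by rw [← hc₂, Matrix.mulVec_single_one]; rfl
      _ = δ • (a₂ • s + b₂ • A *ᵥ s) := by rw [← h₂]
      _ = _ := by module
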